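/- arXiv:1809.02328 — 4 statements merged into one kernel-verified Lean document; each statement's English description precedes it below -/
import Mathlib

section
/- Let ω be a real antisymmetric 4×4 matrix with ⋆ω = ±ω, let θ∓ be as defined (so that ωθ∓ = θ∓ω), and assume det(E₄ − ωθ∓) ≠ 0. Then the matrix g := 2(E₄ − ωθ∓)⁻¹ − E₄ is symmetric, and if moreover θ ≠ 0 (so θ∓ is invertible) and g + E₄ is invertible, then ω = (g − E₄)(g + E₄)⁻¹(θ∓)⁻¹. -/
/-!
Self-dual and anti-self-dual 4×4 matrices are left and right multiplications by imaginary
quaternions, so they commute by associativity. Hence `ω * T` is a product of commuting antisymmetric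
matrices and is symmetric. The matrix `g` is its Cayley transform, which preserves symmetry and is
inverted by `g ↦ (g - 1) * (g + 1)⁻¹`.
-/

open Matrix

namespace Paper

/-- The Levi-Civita symbol on four indices, as the product of signs of differences. -/
def leviCivita (k l m n : Fin 4) : ℝ :=
  ((Int.sign ((l : ℤ) - (k : ℤ)) * Int.sign ((m : ℤ) - (k : ℤ)) *
    Int.sign ((n : ℤ) - (k : ℤ)) * Int.sign ((m : ℤ) - (l : ℤ)) *
    Int.sign ((n : ℤ) - (l : ℤ)) * Int.sign ((n : ℤ) - (m : ℤ)) : ℤ) : ℝ)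

/-- The Hodge star operator on 4×4 real matrices:
`(⋆ω)_{kl} = (1/2) ∑_{m,n} ε_{klmn} ω_{mn}`. -/
noncomputable def hodgeStar (ω : Matrix (Fin 4) (Fin 4) ℝ) : Matrix (Fin 4) (Fin 4) ℝ :=
  Matrix.of fun k l => (1 / 2 : ℝ) * ∑ m : Fin 4, ∑ n : Fin 4, leviCivita k l m n * ω m n

/-- The self-dual matrix `θ⁺`. -/
def thetaPlus (θ : ℝ) : Matrix (Fin 4) (Fin 4) ℝ :=
  !![0, -θ, 0, 0; θ, 0, 0, 0; 0, 0, 0, -θ; 0, 0, θ, 0]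

/-- The anti-self-dual matrix `θ⁻`. -/
def thetaMinus (θ : ℝ) : Matrix (Fin 4) (Fin 4) ℝ :=
  !![0, -θ, 0, 0; θ, 0, 0, 0; 0, 0, 0, θ; 0, 0, -θ, 0]

section CayleyTransform

variable {n R : Type*} [Fintype n] [DecidableEq n] [CommRing R]

/-- The Cayley transform `(1 + A)(1 - A)⁻¹` of a square matrix, in the form `2(1 - A)⁻¹ - 1`.
It is meaningful when `1 - A` is invertible; otherwise the convention for `⁻¹` makes it `-1`. -/
noncomputable def cayleyTransform (A : Matrix n n R) : Matrix n n R :=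
  2 * (1 - A)⁻¹ - 1

theorem cayleyTransform_add_one (A : Matrix n n R) : cayleyTransform A + 1 = 2 * (1 - A)⁻¹ :=
  sub_add_cancel _ _

theorem isSymm_cayleyTransform {A : Matrix n n R} (hA : A.IsSymm) :
    (cayleyTransform A).IsSymm := by
  have hinv : ((1 - A)⁻¹).IsSymm := (isSymm_one.sub hA).inv
  rw [cayleyTransform, two_mul]
  exact (hinv.add hinv).sub isSymm_one

theorem isUnit_cayleyTransform_add_one (h2 : IsUnit (2 : R)) {A : Matrix n n R}
    (hA : IsUnit (1 - A)) : IsUnit (cayleyTransform A + 1) := by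
  have h2' : IsUnit (2 : Matrix n n R) :=
    map_ofNat (algebraMap R (Matrix n n R)) 2 ▸ h2.map (algebraMap R (Matrix n n R))
  rw [cayleyTransform_add_one]
  exact h2'.mul (isUnit_nonsing_inv_iff.mpr hA)

theorem cayleyTransform_sub_one_eq_mul {A : Matrix n n R} (hA : IsUnit (1 - A)) :
    cayleyTransform A - 1 = A * (cayleyTransform A + 1) := by
  have hcancel : (1 - A) * (1 - A)⁻¹ = 1 := mul_nonsing_inv _ ((isUnit_iff_isUnit_det _).mp hA)
  have hmul : A * (1 - A)⁻¹ = (1 - A)⁻¹ - 1 := by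
    rw [sub_mul, one_mul] at hcancel
    exact eq_sub_iff_add_eq'.mpr (sub_eq_iff_eq_add.mp hcancel).symm
  rw [cayleyTransform_add_one, cayleyTransform, two_mul, mul_add, hmul]
  abel

theorem cayleyTransform_sub_one_mul_inv_add_one (h2 : IsUnit (2 : R)) {A : Matrix n n R}
    (hA : IsUnit (1 - A)) :
    (cayleyTransform A - 1) * (cayleyTransform A + 1)⁻¹ = A := by
  have hdet : IsUnit (cayleyTransform A + 1).det :=
    (isUnit_iff_isUnit_det _).mp (isUnit_cayleyTransform_add_one h2 hA)
  rw [cayleyTransform_sub_one_eq_mul hA, mul_nonsing_inv_cancel_right _ _ hdet]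

end CayleyTransform

theorem isSymm_mul_of_transpose_eq_neg {n R : Type*} [Fintype n] [CommRing R] {A B : Matrix n n R}
    (hA : Aᵀ = -A) (hB : Bᵀ = -B) (hAB : Commute A B) : (A * B).IsSymm := by
  rw [IsSymm, transpose_mul, hA, hB, neg_mul_neg, hAB.eq]

theorem isUnit_of_mul_self_eq_smul_one {R A : Type*} [CommSemiring R] [Semiring A] [Algebra R A]
    {r : R} {x : A} (hr : IsUnit r) (hx : x * x = r • (1 : A)) : IsUnit x := by
  have hsq : IsUnit (x ^ 2) := by
    rw [sq, hx, ← Algebra.algebraMap_eq_smul_one]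
    exact hr.map (algebraMap R A)
  exact (isUnit_pow_iff two_ne_zero).mp hsq

section Quaternion

variable {R : Type*} [CommRing R]

/-- The general self-dual matrix, parametrized by its first row: the matrix of left multiplication
by the imaginary quaternion `-(a i + b j + c k)` in the basis `1, i, j, k`. -/
def selfDualMatrix (a b c : R) : Matrix (Fin 4) (Fin 4) R :=
  !![0, a, b, c; -a, 0, c, -b; -b, -c, 0, a; -c, b, -a, 0]

/-- The general anti-self-dual matrix, parametrized by its first row: the matrix of right
multiplication by the imaginary quaternion `-(a i + b j + c k)` in the basis `1, i, j, k`. -/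
def antiSelfDualMatrix (a b c : R) : Matrix (Fin 4) (Fin 4) R :=
  !![0, a, b, c; -a, 0, -c, b; -b, c, 0, -a; -c, -b, a, 0]

theorem commute_selfDualMatrix_antiSelfDualMatrix (a b c x y z : R) :
    Commute (selfDualMatrix a b c) (antiSelfDualMatrix x y z) := by
  ext i j
  fin_cases i <;> fin_cases j <;>
    simp [selfDualMatrix, antiSelfDualMatrix, mul_apply, Fin.sum_univ_four] <;> ring

theorem selfDualMatrix_mul_self (a b c : R) :
    selfDualMatrix a b c * selfDualMatrix a b c = -(a ^ 2 + b ^ 2 + c ^ 2) • 1 := by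
  ext i j
  fin_cases i <;> fin_cases j <;>
    simp [selfDualMatrix, mul_apply, Fin.sum_univ_four] <;> ring

theorem isUnit_selfDualMatrix {a b c : R} (h : IsUnit (a ^ 2 + b ^ 2 + c ^ 2)) :
    IsUnit (selfDualMatrix a b c) :=
  isUnit_of_mul_self_eq_smul_one h.neg (selfDualMatrix_mul_self a b c)

theorem antiSelfDualMatrix_mul_self (a b c : R) :
    antiSelfDualMatrix a b c * antiSelfDualMatrix a b c = -(a ^ 2 + b ^ 2 + c ^ 2) • 1 := by
  ext i j
  fin_cases i <;> fin_cases j <;>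
    simp [antiSelfDualMatrix, mul_apply, Fin.sum_univ_four] <;> ring

theorem isUnit_antiSelfDualMatrix {a b c : R} (h : IsUnit (a ^ 2 + b ^ 2 + c ^ 2)) :
    IsUnit (antiSelfDualMatrix a b c) :=
  isUnit_of_mul_self_eq_smul_one h.neg (antiSelfDualMatrix_mul_self a b c)

end Quaternion

section HodgeStar

variable {ω T : Matrix (Fin 4) (Fin 4) ℝ}

theorem hodgeStar_eq (ω : Matrix (Fin 4) (Fin 4) ℝ) :
    hodgeStar ω = (1 / 2 : ℝ) •
      !![0, ω 2 3 - ω 3 2, ω 3 1 - ω 1 3, ω 1 2 - ω 2 1;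
        ω 3 2 - ω 2 3, 0, ω 0 3 - ω 3 0, ω 2 0 - ω 0 2;
        ω 1 3 - ω 3 1, ω 3 0 - ω 0 3, 0, ω 0 1 - ω 1 0;
        ω 2 1 - ω 1 2, ω 0 2 - ω 2 0, ω 1 0 - ω 0 1, 0] := by
  ext i j
  fin_cases i <;> fin_cases j <;>
    simp [hodgeStar, leviCivita, Fin.sum_univ_four, Int.sign_eq_one_of_pos,
      Fin.coe_ofNat_eq_mod] <;> ring

theorem transpose_hodgeStar (ω : Matrix (Fin 4) (Fin 4) ℝ) : (hodgeStar ω)ᵀ = -hodgeStar ω := by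
  rw [hodgeStar_eq]
  ext i j
  fin_cases i <;> fin_cases j <;> simp <;> ring

theorem hodgeStar_eq_self_iff : hodgeStar ω = ω ↔ ∃ a b c, ω = selfDualMatrix a b c := by
  constructor
  · intro h
    refine ⟨ω 0 1, ω 0 2, ω 0 3, ?_⟩
    have hentry (i j : Fin 4) : hodgeStar ω i j = ω i j := congrFun₂ h i j
    simp only [hodgeStar_eq, Matrix.smul_apply, smul_eq_mul, Fin.forall_fin_succ, of_apply,
      cons_val', cons_val_fin_one, cons_val_zero, cons_val_succ, Fin.succ_zero_eq_one,
      Fin.succ_one_eq_two, Fin.reduceSucc] at hentry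
    ext i j
    fin_cases i <;> fin_cases j <;> simp [selfDualMatrix] <;> linarith
  · rintro ⟨a, b, c, rfl⟩
    rw [hodgeStar_eq]
    ext i j
    fin_cases i <;> fin_cases j <;> simp [selfDualMatrix] <;> ring

theorem hodgeStar_eq_neg_iff : hodgeStar ω = -ω ↔ ∃ a b c, ω = antiSelfDualMatrix a b c := by
  constructor
  · intro h
    refine ⟨ω 0 1, ω 0 2, ω 0 3, ?_⟩
    have hentry (i j : Fin 4) : hodgeStar ω i j = (-ω) i j := congrFun₂ h i j
    simp only [hodgeStar_eq, Matrix.smul_apply, Matrix.neg_apply, smul_eq_mul, Fin.forall_fin_succ,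
      of_apply, cons_val', cons_val_fin_one, cons_val_zero, cons_val_succ, Fin.succ_zero_eq_one,
      Fin.succ_one_eq_two, Fin.reduceSucc] at hentry
    ext i j
    fin_cases i <;> fin_cases j <;> simp [antiSelfDualMatrix] <;> linarith
  · rintro ⟨a, b, c, rfl⟩
    rw [hodgeStar_eq]
    ext i j
    fin_cases i <;> fin_cases j <;> simp [antiSelfDualMatrix] <;> ring

theorem transpose_eq_neg_of_hodgeStar_eq_self (h : hodgeStar ω = ω) : ωᵀ = -ω := by
  simpa only [h] using transpose_hodgeStar ω

theorem transpose_eq_neg_of_hodgeStar_eq_neg (h : hodgeStar ω = -ω) : ωᵀ = -ω := by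
  simpa only [h, transpose_neg, neg_inj] using transpose_hodgeStar ω

theorem commute_of_hodgeStar_eq_self_of_hodgeStar_eq_neg (hω : hodgeStar ω = ω)
    (hT : hodgeStar T = -T) : Commute ω T := by
  obtain ⟨a, b, c, rfl⟩ := hodgeStar_eq_self_iff.mp hω
  obtain ⟨x, y, z, rfl⟩ := hodgeStar_eq_neg_iff.mp hT
  exact commute_selfDualMatrix_antiSelfDualMatrix a b c x y z

theorem isSymm_mul_of_opposite_duality
    (h : (hodgeStar ω = ω ∧ hodgeStar T = -T) ∨ (hodgeStar ω = -ω ∧ hodgeStar T = T)) :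
    (ω * T).IsSymm := by
  rcases h with ⟨hω, hT⟩ | ⟨hω, hT⟩
  · exact isSymm_mul_of_transpose_eq_neg (transpose_eq_neg_of_hodgeStar_eq_self hω)
      (transpose_eq_neg_of_hodgeStar_eq_neg hT)
      (commute_of_hodgeStar_eq_self_of_hodgeStar_eq_neg hω hT)
  · exact isSymm_mul_of_transpose_eq_neg (transpose_eq_neg_of_hodgeStar_eq_neg hω)
      (transpose_eq_neg_of_hodgeStar_eq_self hT)
      (commute_of_hodgeStar_eq_self_of_hodgeStar_eq_neg hT hω).symm

end HodgeStar

theorem thetaPlus_eq_selfDualMatrix (θ : ℝ) : thetaPlus θ = selfDualMatrix (-θ) 0 0 := by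
  simp [thetaPlus, selfDualMatrix]

theorem thetaMinus_eq_antiSelfDualMatrix (θ : ℝ) :
    thetaMinus θ = antiSelfDualMatrix (-θ) 0 0 := by
  simp [thetaMinus, antiSelfDualMatrix]

theorem hodgeStar_thetaPlus (θ : ℝ) : hodgeStar (thetaPlus θ) = thetaPlus θ :=
  hodgeStar_eq_self_iff.mpr ⟨-θ, 0, 0, thetaPlus_eq_selfDualMatrix θ⟩

theorem hodgeStar_thetaMinus (θ : ℝ) : hodgeStar (thetaMinus θ) = -thetaMinus θ :=
  hodgeStar_eq_neg_iff.mpr ⟨-θ, 0, 0, thetaMinus_eq_antiSelfDualMatrix θ⟩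

theorem isUnit_thetaPlus {θ : ℝ} (hθ : θ ≠ 0) : IsUnit (thetaPlus θ) := by
  rw [thetaPlus_eq_selfDualMatrix]
  exact isUnit_selfDualMatrix (by simpa using hθ)

theorem isUnit_thetaMinus {θ : ℝ} (hθ : θ ≠ 0) : IsUnit (thetaMinus θ) := by
  rw [thetaMinus_eq_antiSelfDualMatrix]
  exact isUnit_antiSelfDualMatrix (by simpa using hθ)

theorem g_symm_and_inversion_general {ω T : Matrix (Fin 4) (Fin 4) ℝ}
    (h : (hodgeStar ω = ω ∧ hodgeStar T = -T) ∨ (hodgeStar ω = -ω ∧ hodgeStar T = T))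
    (hdet : (1 - ω * T).det ≠ 0) :
    (cayleyTransform (ω * T)).IsSymm ∧
    (IsUnit T →
      ω = (cayleyTransform (ω * T) - 1) * (cayleyTransform (ω * T) + 1)⁻¹ * T⁻¹) := by
  refine ⟨isSymm_cayleyTransform (isSymm_mul_of_opposite_duality h), fun hT ↦ ?_⟩
  have hunit : IsUnit (1 - ω * T) := (isUnit_iff_isUnit_det _).mpr hdet.isUnit
  rw [cayleyTransform_sub_one_mul_inv_add_one two_ne_zero.isUnit hunit,
    mul_nonsing_inv_cancel_right _ _ ((isUnit_iff_isUnit_det _).mp hT)]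

/-- For an (anti-)self-dual antisymmetric `ω` with `det (E₄ - ω θ∓) ≠ 0`, the matrix
`g = 2(E₄ - ω θ∓)⁻¹ - E₄` is symmetric, and if `θ ≠ 0` and `g + E₄` is invertible then
`ω = (g - E₄)(g + E₄)⁻¹ (θ∓)⁻¹`. -/
theorem g_symm_and_inversion (θ : ℝ) (ω T : Matrix (Fin 4) (Fin 4) ℝ)
    (hanti : ωᵀ = -ω)
    (hsd : (hodgeStar ω = ω ∧ T = thetaMinus θ) ∨ (hodgeStar ω = -ω ∧ T = thetaPlus θ))
    (hdet : (1 - ω * T).det ≠ 0) :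
    (2 * (1 - ω * T)⁻¹ - 1)ᵀ = 2 * (1 - ω * T)⁻¹ - 1 ∧
    (θ ≠ 0 → IsUnit ((2 * (1 - ω * T)⁻¹ - 1) + 1) →
      ω = ((2 * (1 - ω * T)⁻¹ - 1) - 1) * ((2 * (1 - ω * T)⁻¹ - 1) + 1)⁻¹ * T⁻¹) := by
  rcases hsd with ⟨hω, rfl⟩ | ⟨hω, rfl⟩
  · exact (g_symm_and_inversion_general (.inl ⟨hω, hodgeStar_thetaMinus θ⟩) hdet).imp_right
      fun hinv hθ _ ↦ hinv (isUnit_thetaMinus hθ)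
  · exact (g_symm_and_inversion_general (.inr ⟨hω, hodgeStar_thetaPlus θ⟩) hdet).imp_right
      fun hinv hθ _ ↦ hinv (isUnit_thetaPlus hθ)

end Paper
end

section
/- For every 2×2 complex anti-Hermitian matrix ω_C, the determinant of its real 4×4 image satisfies det(ι_skew(ω_C)) = 16 (det ω_C)². -/
open Matrix

namespace Paper

/-- The map `ι_skew` from 2×2 complex anti-Hermitian matrices to real antisymmetric
4×4 matrices. -/
noncomputable def iotaSkew (w : Matrix (Fin 2) (Fin 2) ℂ) : Matrix (Fin 4) (Fin 4) ℝ :=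
  !![0, (2 * Complex.I * w 0 0).re, (w 0 1 - w 1 0).re, (Complex.I * (w 0 1 + w 1 0)).re;
     -(2 * Complex.I * w 0 0).re, 0, (-(Complex.I * (w 0 1 + w 1 0))).re, (w 0 1 - w 1 0).re;
     -(w 0 1 - w 1 0).re, (Complex.I * (w 0 1 + w 1 0)).re, 0, (2 * Complex.I * w 1 1).re;
     (-(Complex.I * (w 0 1 + w 1 0))).re, -(w 0 1 - w 1 0).re, -(2 * Complex.I * w 1 1).re, 0]

/-!
The determinant of an alternating 4×4 matrix is the square of its Pfaffian. On anti-Hermitian `w`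
the real parts in `iotaSkew w` discard nothing, so its Pfaffian can be computed over `ℂ`:
`(2i w₁₁)(2i w₂₂) - (w₁₂ - w₂₁)² + (w₁₂ + w₂₁)² = -4 det w`.
-/

/-- The Pfaffian of an alternating 4×4 matrix. It reads only the entries above the diagonal, so it
is defined on all 4×4 matrices but is meaningful only on alternating ones. -/
def pfaffianFour {R : Type*} [CommRing R] (A : Matrix (Fin 4) (Fin 4) R) : R :=
  A 0 1 * A 2 3 - A 0 2 * A 1 3 + A 0 3 * A 1 2

theorem det_eq_pfaffianFour_sq {R : Type*} [CommRing R] {A : Matrix (Fin 4) (Fin 4) R}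
    (hskew : Aᵀ = -A) (hdiag : A.diag = 0) : A.det = pfaffianFour A ^ 2 := by
  have hlower (i j : Fin 4) : A j i = -A i j := congrFun₂ hskew i j
  have hzero (i : Fin 4) : A i i = 0 := congrFun hdiag i
  rw [det_succ_row_zero, Fin.sum_univ_four]
  simp only [det_fin_three, submatrix_apply, Fin.succAbove, Fin.reduceCastSucc, Fin.reduceLT,
    Fin.reduceSucc, reduceIte, Fin.coe_ofNat_eq_mod]
  simp only [hzero, hlower 0 1, hlower 0 2, hlower 0 3, hlower 1 2, hlower 1 3, hlower 2 3,
    pfaffianFour]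
  ring

theorem transpose_iotaSkew (w : Matrix (Fin 2) (Fin 2) ℂ) : (iotaSkew w)ᵀ = -iotaSkew w := by
  ext i j
  fin_cases i <;> fin_cases j <;> simp [iotaSkew]

theorem diag_iotaSkew (w : Matrix (Fin 2) (Fin 2) ℂ) : (iotaSkew w).diag = 0 := by
  ext i
  fin_cases i <;> rfl

section AntiHermitian

open scoped ComplexConjugate

variable {n : Type*} {w : Matrix n n ℂ}

theorem conj_apply_of_conjTranspose_eq_neg (hw : wᴴ = -w) (i j : n) :
    conj (w i j) = -w j i :=
  congrFun₂ hw j i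

theorem ofReal_re_apply_sub_apply (hw : wᴴ = -w) (i j : n) :
    ((w i j - w j i).re : ℂ) = w i j - w j i := by
  rw [← Complex.conj_eq_iff_re, map_sub, conj_apply_of_conjTranspose_eq_neg hw,
    conj_apply_of_conjTranspose_eq_neg hw]
  ring

theorem ofReal_re_I_mul_apply_add_apply (hw : wᴴ = -w) (i j : n) :
    ((Complex.I * (w i j + w j i)).re : ℂ) = Complex.I * (w i j + w j i) := by
  rw [← Complex.conj_eq_iff_re, map_mul, map_add, Complex.conj_I,
    conj_apply_of_conjTranspose_eq_neg hw, conj_apply_of_conjTranspose_eq_neg hw]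
  ring

theorem ofReal_re_two_mul_I_mul_apply_self (hw : wᴴ = -w) (i : n) :
    ((2 * Complex.I * w i i).re : ℂ) = 2 * Complex.I * w i i := by
  have hdouble : 2 * Complex.I * w i i = Complex.I * (w i i + w i i) := by ring
  rw [hdouble, ofReal_re_I_mul_apply_add_apply hw]

end AntiHermitian

theorem pfaffianFour_iotaSkew {w : Matrix (Fin 2) (Fin 2) ℂ} (hw : wᴴ = -w) :
    ((pfaffianFour (iotaSkew w) : ℝ) : ℂ) = -4 * w.det := by
  have hpf : pfaffianFour (iotaSkew w) =
      (2 * Complex.I * w 0 0).re * (2 * Complex.I * w 1 1).re - (w 0 1 - w 1 0).re ^ 2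
        - (Complex.I * (w 0 1 + w 1 0)).re ^ 2 := by
    simp only [pfaffianFour, iotaSkew, of_apply, cons_val, Complex.neg_re]
    ring
  calc ((pfaffianFour (iotaSkew w) : ℝ) : ℂ)
      = (2 * Complex.I * w 0 0) * (2 * Complex.I * w 1 1) - (w 0 1 - w 1 0) ^ 2
          - (Complex.I * (w 0 1 + w 1 0)) ^ 2 := by
        rw [hpf, Complex.ofReal_sub, Complex.ofReal_sub, Complex.ofReal_mul, Complex.ofReal_pow,
          Complex.ofReal_pow, ofReal_re_two_mul_I_mul_apply_self hw,
          ofReal_re_two_mul_I_mul_apply_self hw, ofReal_re_apply_sub_apply hw,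
          ofReal_re_I_mul_apply_add_apply hw]
    _ = -4 * w.det := by
        rw [det_fin_two]
        linear_combination (4 * w 0 0 * w 1 1 - (w 0 1 + w 1 0) ^ 2) * Complex.I_sq

/-- For every 2×2 complex anti-Hermitian matrix `w`, `det (ι_skew w) = 16 (det w)²`. -/
theorem det_iotaSkew (w : Matrix (Fin 2) (Fin 2) ℂ) (hw : wᴴ = -w) :
    ((iotaSkew w).det : ℂ) = 16 * (w.det) ^ 2 := by
  rw [det_eq_pfaffianFour_sq (transpose_iotaSkew w) (diag_iotaSkew w), Complex.ofReal_pow,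
    pfaffianFour_iotaSkew hw]
  ring

end Paper
end

section
/- Let F be a 2×2 complex traceless anti-Hermitian matrix with entries F₁₁, F₁₂, F₂₁ = −conj(F₁₂), F₂₂ = −F₁₁ (F₁₁ purely imaginary), and let θ be a real number with 4 (det F) θ² ≠ 1. Then ι_sym of the 2×2 Hermitian matrix (1/(4 (det F) θ² − 1)) · [[−4i F₁₁ θ − 2, −4i F₁₂ θ], [−4i F₂₁ θ, 4i F₁₁ θ − 2]] − E₂ equals 2(E₄ − ι_skew(F) θ⁺)⁻¹ − E₄. -/
open Matrix

namespace Paper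

/-- The map `ι_sym` from 2×2 complex Hermitian matrices to real symmetric 4×4 matrices. -/
noncomputable def iotaSym (h : Matrix (Fin 2) (Fin 2) ℂ) : Matrix (Fin 4) (Fin 4) ℝ :=
  !![(h 0 0).re, 0, ((h 0 1 + h 1 0) / 2).re, ((h 1 0 - h 0 1) / (2 * Complex.I)).re;
     0, (h 0 0).re, (-((h 1 0 - h 0 1) / (2 * Complex.I))).re, ((h 0 1 + h 1 0) / 2).re;
     ((h 0 1 + h 1 0) / 2).re, (-((h 1 0 - h 0 1) / (2 * Complex.I))).re, (h 1 1).re, 0;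
     ((h 1 0 - h 0 1) / (2 * Complex.I)).re, ((h 0 1 + h 1 0) / 2).re, 0, (h 1 1).re]

/-!
Replacing each complex entry `x + iy` by the real block with rows `(x, -y)` and `(y, x)` defines a
homomorphism `ρ` of real algebras from complex to real matrices. On Hermitian matrices `ι_sym` is
`ρ`, on anti-Hermitian ones `ι_skew` is `2ρ`, and `θ⁺ = ρ(iθ)`. Hence `ι_skew(F) θ⁺ = ρ(H)` with
`H = 2iθF` Hermitian, and the right-hand side is `ρ(2(1 - H)⁻¹ - 1)`. Since `H` is traceless,
`1 - H` has adjugate `1 + H` and determinant `1 + det H = 1 - 4 (det F) θ²`.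
-/

section Traceless

variable {R K : Type*} [CommRing R] [Field K]

theorem det_one_sub_of_trace_eq_zero {A : Matrix (Fin 2) (Fin 2) R} (hA : A.trace = 0) :
    (1 - A).det = 1 + A.det := by
  rw [trace_fin_two] at hA
  simp only [det_fin_two, Matrix.sub_apply, one_apply, if_true, zero_ne_one, one_ne_zero, if_false]
  linear_combination -hA

theorem adjugate_one_sub_of_trace_eq_zero {A : Matrix (Fin 2) (Fin 2) R} (hA : A.trace = 0) :
    (1 - A).adjugate = 1 + A := by
  rw [trace_fin_two, add_comm] at hA
  ext i j
  fin_cases i <;> fin_cases j <;>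
    simp [adjugate_fin_two, eq_neg_of_add_eq_zero_left hA, sub_eq_add_neg]

theorem inv_one_sub_of_trace_eq_zero {A : Matrix (Fin 2) (Fin 2) K} (hA : A.trace = 0) :
    (1 - A)⁻¹ = (1 + A.det)⁻¹ • (1 + A) := by
  rw [inv_def, det_one_sub_of_trace_eq_zero hA, adjugate_one_sub_of_trace_eq_zero hA,
    Ring.inverse_eq_inv']

end Traceless

theorem map_nonsing_inv {m n R S F : Type*} [Fintype m] [DecidableEq m] [Fintype n]
    [DecidableEq n] [CommRing R] [CommRing S] [FunLike F (Matrix m m R) (Matrix n n S)]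
    [MonoidHomClass F (Matrix m m R) (Matrix n n S)] (f : F) {A : Matrix m m R}
    (hA : IsUnit A.det) : f A⁻¹ = (f A)⁻¹ :=
  (inv_eq_right_inv (by rw [← map_mul, mul_nonsing_inv A hA, map_one])).symm

theorem isHermitian_smul_of_star_eq_neg {n R : Type*} [CommRing R] [StarRing R] {c : R}
    {A : Matrix n n R} (hc : star c = -c) (hA : Aᴴ = -A) : (c • A).IsHermitian := by
  rw [IsHermitian, conjTranspose_smul, hc, hA, neg_smul_neg]

theorem isHermitian_two_mul_inv_one_sub_sub_one {n R : Type*} [Fintype n] [DecidableEq n]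
    [CommRing R] [StarRing R] {H : Matrix n n R} (hH : H.IsHermitian) :
    (2 * (1 - H)⁻¹ - 1).IsHermitian := by
  have h_inv : ((1 - H)⁻¹).IsHermitian := (isHermitian_one.sub hH).inv
  rw [two_mul]
  exact (h_inv.add h_inv).sub isHermitian_one

/-- The realification of complex `m × m` matrices: each entry `x + iy` becomes the real block with
rows `(x, -y)` and `(y, x)`. The rows (and columns) numbered `2k` and `2k + 1` come from the
`k`-th complex one, counting from zero. -/
noncomputable def realification (m : ℕ) :
    Matrix (Fin m) (Fin m) ℂ →ₐ[ℝ] Matrix (Fin (m * 2)) (Fin (m * 2)) ℝ :=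
  ((reindexAlgEquiv ℝ ℝ finProdFinEquiv).toAlgHom.comp
    (compAlgEquiv (Fin m) (Fin 2) ℝ ℝ).toAlgHom).comp
      (Algebra.leftMulMatrix Complex.basisOneI).mapMatrix

theorem realification_two (M : Matrix (Fin 2) (Fin 2) ℂ) :
    realification 2 M =
      !![(M 0 0).re, -(M 0 0).im, (M 0 1).re, -(M 0 1).im;
         (M 0 0).im, (M 0 0).re, (M 0 1).im, (M 0 1).re;
         (M 1 0).re, -(M 1 0).im, (M 1 1).re, -(M 1 1).im;
         (M 1 0).im, (M 1 0).re, (M 1 1).im, (M 1 1).re] := by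
  have entry (i j k l : Fin 2) : realification 2 M (finProdFinEquiv (i, k)) (finProdFinEquiv (j, l))
      = !![(M i j).re, -(M i j).im; (M i j).im, (M i j).re] k l := by
    simp [realification, Algebra.leftMulMatrix_complex, -finProdFinEquiv_apply_val]
  ext p q
  obtain ⟨⟨i, k⟩, rfl⟩ := finProdFinEquiv.surjective p
  obtain ⟨⟨j, l⟩, rfl⟩ := finProdFinEquiv.surjective q
  rw [entry]
  fin_cases i <;> fin_cases j <;> fin_cases k <;> fin_cases l <;> rfl

theorem iotaSym_eq_realification {H : Matrix (Fin 2) (Fin 2) ℂ} (hH : H.IsHermitian) :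
    iotaSym H = realification 2 H := by
  have diag_im (i : Fin 2) : (H i i).im = 0 := Complex.conj_eq_iff_im.mp (hH.apply i i)
  have off_diag : H 1 0 = star (H 0 1) := (hH.apply 1 0).symm
  rw [realification_two, iotaSym, diag_im, diag_im, off_diag]
  ext i j
  fin_cases i <;> fin_cases j <;> simp [Complex.div_re, Complex.normSq_apply] <;> ring

theorem iotaSkew_eq_realification {A : Matrix (Fin 2) (Fin 2) ℂ} (hA : Aᴴ = -A) :
    iotaSkew A = 2 * realification 2 A := by
  have entry (i j : Fin 2) : star (A j i) = -A i j := congr_fun₂ hA i j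
  have diag_re (i : Fin 2) : (A i i).re = 0 := by
    simpa [self_eq_neg] using congrArg Complex.re (entry i i)
  have off_diag : A 1 0 = -star (A 0 1) := by rw [entry, neg_neg]
  rw [two_mul, realification_two, iotaSkew, diag_re, diag_re, off_diag]
  ext i j
  fin_cases i <;> fin_cases j <;> simp <;> ring

theorem thetaPlus_eq_realification (θ : ℝ) :
    thetaPlus θ = realification 2 ((θ * Complex.I) • 1) := by
  rw [realification_two, thetaPlus]
  ext i j
  fin_cases i <;> fin_cases j <;> simp

theorem iotaSkew_mul_thetaPlus {A : Matrix (Fin 2) (Fin 2) ℂ} (hA : Aᴴ = -A) (θ : ℝ) :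
    iotaSkew A * thetaPlus θ = realification 2 ((2 * θ * Complex.I) • A) := by
  rw [iotaSkew_eq_realification hA, thetaPlus_eq_realification, mul_assoc, ← map_mul,
    Matrix.mul_smul, mul_one, two_mul, ← map_add, ← add_smul, ← two_mul, mul_assoc]

theorem det_two_mul_I_smul (F : Matrix (Fin 2) (Fin 2) ℂ) (t : ℂ) :
    ((2 * t * Complex.I) • F).det = -(4 * F.det * t ^ 2) := by
  rw [det_smul, Fintype.card_fin]
  linear_combination 4 * t ^ 2 * F.det * Complex.I_sq

theorem two_mul_inv_one_sub_two_mul_I_smul {F : Matrix (Fin 2) (Fin 2) ℂ} (hF : F.trace = 0)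
    (t : ℂ) :
    2 * (1 - (2 * t * Complex.I) • F)⁻¹ = (4 * F.det * t ^ 2 - 1)⁻¹ •
      !![-4 * Complex.I * F 0 0 * t - 2, -4 * Complex.I * F 0 1 * t;
         -4 * Complex.I * F 1 0 * t, 4 * Complex.I * F 0 0 * t - 2] := by
  have h_trace : ((2 * t * Complex.I) • F).trace = 0 := by rw [trace_smul, hF, smul_zero]
  have h11 : F 1 1 = -F 0 0 := by
    rw [trace_fin_two, add_comm] at hF
    exact eq_neg_of_add_eq_zero_left hF
  rw [inv_one_sub_of_trace_eq_zero h_trace, det_two_mul_I_smul, ← sub_eq_add_neg,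
    ← neg_sub (4 * F.det * t ^ 2) 1, inv_neg, neg_smul, ← smul_neg, Matrix.mul_smul]
  congr 1
  rw [two_mul]
  ext i j
  fin_cases i <;> fin_cases j <;> simp [h11] <;> ring

/-- For a traceless anti-Hermitian `F` and real `θ` with `4 (det F) θ² ≠ 1`,
`ι_sym` of `(1/(4 (det F) θ² − 1)) · [[−4i F₁₁ θ − 2, −4i F₁₂ θ], [−4i F₂₁ θ, 4i F₁₁ θ − 2]] − E₂`
equals `2(E₄ − ι_skew(F) θ⁺)⁻¹ − E₄`. -/
theorem iotaSym_metric_formula (F : Matrix (Fin 2) (Fin 2) ℂ) (θ : ℝ)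
    (hF : Fᴴ = -F) (htr : F 1 1 = -F 0 0)
    (hne : 4 * F.det * (θ : ℂ) ^ 2 ≠ 1) :
    iotaSym ((4 * F.det * (θ : ℂ) ^ 2 - 1)⁻¹ •
        !![-4 * Complex.I * F 0 0 * (θ : ℂ) - 2, -4 * Complex.I * F 0 1 * (θ : ℂ);
           -4 * Complex.I * F 1 0 * (θ : ℂ), 4 * Complex.I * F 0 0 * (θ : ℂ) - 2] - 1)
      = 2 * (1 - iotaSkew F * thetaPlus θ)⁻¹ - 1 := by
  have h_trace : F.trace = 0 := by rw [trace_fin_two, htr, add_neg_cancel]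
  rw [← two_mul_inv_one_sub_two_mul_I_smul h_trace, iotaSkew_mul_thetaPlus hF]
  set H := (2 * θ * Complex.I) • F with hH_def
  have hH : H.IsHermitian := isHermitian_smul_of_star_eq_neg (by simp) hF
  have hH_trace : H.trace = 0 := by rw [hH_def, trace_smul, h_trace, smul_zero]
  have h_det : IsUnit (1 - H).det := by
    rw [det_one_sub_of_trace_eq_zero hH_trace, hH_def, det_two_mul_I_smul, ← sub_eq_add_neg]
    exact (sub_ne_zero.mpr hne.symm).isUnit
  calc iotaSym (2 * (1 - H)⁻¹ - 1)
      = realification 2 (2 * (1 - H)⁻¹ - 1) :=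
        iotaSym_eq_realification (isHermitian_two_mul_inv_one_sub_sub_one hH)
    _ = 2 * (realification 2 (1 - H))⁻¹ - 1 := by
        rw [map_sub, map_mul, map_ofNat, map_one, map_nonsing_inv _ h_det]
    _ = 2 * (1 - realification 2 H)⁻¹ - 1 := by rw [map_sub, map_one]

end Paper
end

section
/- Fix ζ > 0 and nonnegative integers k₁, k₂, l₁, l₂, m₁, m₂, n₁, n₂. Then the Karabegov star product series for e_{(k₁,k₂,l₁,l₂)} * e_{(m₁,m₂,n₁,n₂)} converges at every point of ℂ² and e_{(k₁,k₂,l₁,l₂)} * e_{(m₁,m₂,n₁,n₂)} = δ_{l₁ m₁} δ_{l₂ m₂} e_{(k₁,k₂,n₁,n₂)}. -/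
namespace Paper

/-- Directional derivative (over `ℝ`) of a function on `ℂ²` in the direction `v`. -/
noncomputable def pdC (v : Fin 2 → ℂ) (f : (Fin 2 → ℂ) → ℂ) (p : Fin 2 → ℂ) : ℂ :=
  fderiv ℝ f p v

/-- The Wirtinger derivative `∂_{z_k}` on `ℂ²`. -/
noncomputable def dZ (k : Fin 2) (f : (Fin 2 → ℂ) → ℂ) (p : Fin 2 → ℂ) : ℂ :=
  (1 / 2 : ℂ) * (pdC (Pi.single k 1) f p - Complex.I * pdC (Pi.single k Complex.I) f p)

/-- The Wirtinger derivative `∂_{z̄_k}` on `ℂ²`. -/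
noncomputable def dZbar (k : Fin 2) (f : (Fin 2 → ℂ) → ℂ) (p : Fin 2 → ℂ) : ℂ :=
  (1 / 2 : ℂ) * (pdC (Pi.single k 1) f p + Complex.I * pdC (Pi.single k Complex.I) f p)

/-- Iterated holomorphic Wirtinger derivatives `∂_{z_{k₁}} ⋯ ∂_{z_{kₙ}}`. -/
noncomputable def dZIter : (n : ℕ) → (Fin n → Fin 2) → ((Fin 2 → ℂ) → ℂ) → ((Fin 2 → ℂ) → ℂ)
  | 0, _, f => f
  | n + 1, ks, f => dZ (ks 0) (dZIter n (fun i => ks i.succ) f)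

/-- Iterated antiholomorphic Wirtinger derivatives `∂_{z̄_{k₁}} ⋯ ∂_{z̄_{kₙ}}`. -/
noncomputable def dZbarIter : (n : ℕ) → (Fin n → Fin 2) → ((Fin 2 → ℂ) → ℂ) → ((Fin 2 → ℂ) → ℂ)
  | 0, _, f => f
  | n + 1, ks, f => dZbar (ks 0) (dZbarIter n (fun i => ks i.succ) f)

/-- The `n`-th term of the Karabegov star-product series:
`(ζⁿ/n!) ∑_{k₁,…,kₙ ∈ {1,2}} (∂_{z̄_{k₁}}⋯∂_{z̄_{kₙ}} f)(∂_{z_{k₁}}⋯∂_{z_{kₙ}} g)`. -/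
noncomputable def starTerm (ζ : ℝ) (f g : (Fin 2 → ℂ) → ℂ) (n : ℕ) (p : Fin 2 → ℂ) : ℂ :=
  ((ζ : ℂ) ^ n / (n.factorial : ℂ)) *
    ∑ ks : Fin n → Fin 2, dZbarIter n ks f p * dZIter n ks g p

/-- The Karabegov star product with separation of variables on `ℂ²`,
`f * g = Σ_{n=0}^∞ (ζⁿ/n!) Σ_{k₁,…,kₙ} (∂_{z̄_{k₁}}⋯∂_{z̄_{kₙ}} f)(∂_{z_{k₁}}⋯∂_{z_{kₙ}} g)`. -/
noncomputable def starProd (ζ : ℝ) (f g : (Fin 2 → ℂ) → ℂ) (p : Fin 2 → ℂ) : ℂ :=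
  ∑' n : ℕ, starTerm ζ f g n p


/-- The twisted Fock basis function
`e_{(m₁,m₂,n₁,n₂)} = z₁^{m₁} z₂^{m₂} e^{−(z₁z̄₁+z₂z̄₂)/ζ} z̄₁^{n₁} z̄₂^{n₂}
  / (√(m₁!m₂!n₁!n₂!) (√ζ)^{m₁+m₂+n₁+n₂})`. -/
noncomputable def eFun (ζ : ℝ) (m₁ m₂ n₁ n₂ : ℕ) (p : Fin 2 → ℂ) : ℂ :=
  p 0 ^ m₁ * p 1 ^ m₂ *
    Complex.exp (-(p 0 * starRingEnd ℂ (p 0) + p 1 * starRingEnd ℂ (p 1)) / (ζ : ℂ)) *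
    starRingEnd ℂ (p 0) ^ n₁ * starRingEnd ℂ (p 1) ^ n₂ /
    ((Real.sqrt (m₁.factorial * m₂.factorial * n₁.factorial * n₂.factorial) : ℂ) *
      (Real.sqrt ζ : ℂ) ^ (m₁ + m₂ + n₁ + n₂))

/-!
The star product differentiates its left factor only in `z̄` and its right factor only in `z`, so
holomorphic functions factor out on the left and antiholomorphic ones on the right, and complex
conjugation reverses the order of the factors. Hence it suffices to multiply `z̄^l e` by `z^m e`,
where `e = e^{-(z₁z̄₁ + z₂z̄₂)/ζ}`. The Leibniz rule gives
`(z̄_i f) * g = z̄_i (f * g) + ζ (f * ∂_{z_i} g) = f * ((z̄_i + ζ∂_{z_i}) g)`,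
and `z̄_i + ζ∂_{z_i}` kills `e`, so it sends `u e` to `ζ (∂_{z_i} u) e`. Thus each factor `z̄_i` on
the left is traded for a derivative `ζ∂_{z_i}` of the monomial on the right, and what remains is
`e * e = e`, an exponential series.
-/

section StarProduct

open scoped ContDiff

variable {f g u : (Fin 2 → ℂ) → ℂ} {p : Fin 2 → ℂ}

lemma dZ_mul (k : Fin 2) (hf : DifferentiableAt ℝ f p) (hg : DifferentiableAt ℝ g p) :
    dZ k (fun q => f q * g q) p = f p * dZ k g p + dZ k f p * g p := by
  simp only [dZ, pdC, fderiv_fun_mul hf hg, add_apply, smul_apply, smul_eq_mul]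
  ring

lemma dZbar_mul (k : Fin 2) (hf : DifferentiableAt ℝ f p) (hg : DifferentiableAt ℝ g p) :
    dZbar k (fun q => f q * g q) p = f p * dZbar k g p + dZbar k f p * g p := by
  simp only [dZbar, pdC, fderiv_fun_mul hf hg, add_apply, smul_apply, smul_eq_mul]
  ring

lemma dZbar_add (k : Fin 2) (hf : DifferentiableAt ℝ f p) (hg : DifferentiableAt ℝ g p) :
    dZbar k (fun q => f q + g q) p = dZbar k f p + dZbar k g p := by
  simp only [dZbar, pdC, fderiv_fun_add hf hg, add_apply]
  ring

lemma dZ_sum {ι : Type*} [Fintype ι] {F : ι → (Fin 2 → ℂ) → ℂ} (k : Fin 2)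
    (hF : ∀ i, DifferentiableAt ℝ (F i) p) :
    dZ k (fun q => ∑ i, F i q) p = ∑ i, dZ k (F i) p := by
  simp only [dZ, pdC, fderiv_fun_sum fun i _ => hF i, sum_apply,
    Finset.mul_sum, ← Finset.sum_sub_distrib]

lemma dZ_cexp (k : Fin 2) (hf : DifferentiableAt ℝ f p) :
    dZ k (fun q => Complex.exp (f q)) p = Complex.exp (f p) * dZ k f p := by
  simp only [dZ, pdC, hf.hasFDerivAt.cexp.fderiv, smul_apply, smul_eq_mul]
  ring

lemma pdC_single_I (k : Fin 2) (hu : DifferentiableAt ℂ u p) :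
    pdC (Pi.single k Complex.I) u p = Complex.I * pdC (Pi.single k 1) u p := by
  have hI : (Pi.single k Complex.I : Fin 2 → ℂ) = Complex.I • Pi.single k 1 := by
    simp [← Pi.single_smul]
  simp only [pdC, hu.fderiv_restrictScalars ℝ, ContinuousLinearMap.coe_restrictScalars', hI,
    map_smul, smul_eq_mul]

lemma dZ_eq_fderiv (k : Fin 2) (hu : DifferentiableAt ℂ u p) :
    dZ k u p = fderiv ℂ u p (Pi.single k 1) := by
  rw [dZ, pdC_single_I k hu, pdC, hu.fderiv_restrictScalars ℝ,
    ContinuousLinearMap.coe_restrictScalars']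
  linear_combination (-1 / 2 * fderiv ℂ u p (Pi.single k 1)) * Complex.I_mul_I

lemma dZbar_eq_zero (k : Fin 2) (hu : DifferentiableAt ℂ u p) : dZbar k u p = 0 := by
  rw [dZbar, pdC_single_I k hu]
  linear_combination (1 / 2 * pdC (Pi.single k 1) u p) * Complex.I_mul_I

lemma pdC_comp_star (v : Fin 2 → ℂ) (f : (Fin 2 → ℂ) → ℂ) (p : Fin 2 → ℂ) :
    pdC v (fun q => f (star q)) p = pdC (star v) f (star p) := by
  have h := (starL' ℝ : (Fin 2 → ℂ) ≃L[ℝ] (Fin 2 → ℂ)).comp_right_fderiv (f := f) (x := p)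
  exact DFunLike.congr_fun h v

lemma dZ_comp_star (k : Fin 2) (f : (Fin 2 → ℂ) → ℂ) (p : Fin 2 → ℂ) :
    dZ k (fun q => f (star q)) p = dZbar k f (star p) := by
  have hI : star (Pi.single k Complex.I : Fin 2 → ℂ) = -Pi.single k Complex.I := by
    simp [← Pi.single_neg]
  simp only [dZ, dZbar, pdC_comp_star, hI, Pi.star_single, star_one]
  simp only [pdC, map_neg, mul_neg, sub_neg_eq_add]

lemma dZbar_comp_star (k : Fin 2) (f : (Fin 2 → ℂ) → ℂ) (p : Fin 2 → ℂ) :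
    dZbar k (fun q => f (star q)) p = dZ k f (star p) := by
  simpa using (dZ_comp_star k (fun q => f (star q)) (star p)).symm

lemma contDiff_pdC (v : Fin 2 → ℂ) (hf : ContDiff ℝ ∞ f) : ContDiff ℝ ∞ (pdC v f) :=
  (hf.fderiv_right le_rfl).clm_apply contDiff_const

lemma contDiff_dZ (k : Fin 2) (hf : ContDiff ℝ ∞ f) : ContDiff ℝ ∞ (dZ k f) :=
  contDiff_const.mul ((contDiff_pdC _ hf).sub (contDiff_const.mul (contDiff_pdC _ hf)))

lemma contDiff_dZbar (k : Fin 2) (hf : ContDiff ℝ ∞ f) : ContDiff ℝ ∞ (dZbar k f) :=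
  contDiff_const.mul ((contDiff_pdC _ hf).add (contDiff_const.mul (contDiff_pdC _ hf)))

lemma pdC_comm (v w : Fin 2 → ℂ) (hf : ContDiff ℝ ∞ f) :
    pdC v (pdC w f) p = pdC w (pdC v f) p := by
  have hd : DifferentiableAt ℝ (fderiv ℝ f) p :=
    (hf.fderiv_right (m := ∞) le_rfl).differentiable (by simp) p
  have hsymm : IsSymmSndFDerivAt ℝ f p := (hf.contDiffAt (x := p)).isSymmSndFDerivAt (by
    rw [minSmoothness_of_isRCLikeNormedField]
    exact WithTop.coe_le_coe.2 le_top)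
  have hpdC (v w : Fin 2 → ℂ) : pdC v (pdC w f) p = fderiv ℝ (fderiv ℝ f) p v w := by
    change fderiv ℝ (fun q => fderiv ℝ f q w) p v = _
    simp [fderiv_clm_apply hd (differentiableAt_const w)]
  rw [hpdC, hpdC, hsymm]

lemma pdC_dZ (v : Fin 2 → ℂ) (k : Fin 2) (hf : ContDiff ℝ ∞ f) :
    pdC v (dZ k f) p = 1 / 2 * (pdC v (pdC (Pi.single k 1) f) p -
      Complex.I * pdC v (pdC (Pi.single k Complex.I) f) p) := by
  have hd (w : Fin 2 → ℂ) : DifferentiableAt ℝ (pdC w f) p :=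
    (contDiff_pdC w hf).differentiable (by simp) p
  have h := (((hd (Pi.single k 1)).hasFDerivAt.sub
    ((hd (Pi.single k Complex.I)).hasFDerivAt.const_mul Complex.I)).const_mul (1 / 2 : ℂ)).fderiv
  exact DFunLike.congr_fun h v

lemma dZ_comm (i k : Fin 2) (hf : ContDiff ℝ ∞ f) : dZ i (dZ k f) = dZ k (dZ i f) := by
  funext p
  rw [dZ, dZ, pdC_dZ _ _ hf, pdC_dZ _ _ hf, pdC_dZ _ _ hf, pdC_dZ _ _ hf,
    pdC_comm (Pi.single i 1) (Pi.single k 1) hf, pdC_comm (Pi.single i 1) _ hf,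
    pdC_comm _ (Pi.single k 1) hf, pdC_comm (Pi.single i Complex.I) _ hf]
  ring

lemma dZIter_comp_star (n : ℕ) (ks : Fin n → Fin 2) (f : (Fin 2 → ℂ) → ℂ) :
    dZIter n ks (fun q => f (star q)) = fun q => dZbarIter n ks f (star q) := by
  induction n with
  | zero => rfl
  | succ n ih => funext p; rw [dZIter, ih, dZ_comp_star, dZbarIter]

lemma dZbarIter_comp_star (n : ℕ) (ks : Fin n → Fin 2) (f : (Fin 2 → ℂ) → ℂ) :
    dZbarIter n ks (fun q => f (star q)) = fun q => dZIter n ks f (star q) := by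
  induction n with
  | zero => rfl
  | succ n ih => funext p; rw [dZbarIter, ih, dZbar_comp_star, dZIter]

lemma dZIter_succ_last (n : ℕ) (ks : Fin (n + 1) → Fin 2) (f : (Fin 2 → ℂ) → ℂ) :
    dZIter (n + 1) ks f = dZIter n (Fin.init ks) (dZ (ks (Fin.last n)) f) := by
  induction n with
  | zero => rfl
  | succ n ih => rw [dZIter, ih]; rfl

lemma dZbarIter_succ_last (n : ℕ) (ks : Fin (n + 1) → Fin 2) (f : (Fin 2 → ℂ) → ℂ) :
    dZbarIter (n + 1) ks f = dZbarIter n (Fin.init ks) (dZbar (ks (Fin.last n)) f) := by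
  induction n with
  | zero => rfl
  | succ n ih => rw [dZbarIter, ih]; rfl

lemma contDiff_dZbarIter (n : ℕ) (ks : Fin n → Fin 2) (hf : ContDiff ℝ ∞ f) :
    ContDiff ℝ ∞ (dZbarIter n ks f) := by
  induction n with
  | zero => exact hf
  | succ n ih => exact contDiff_dZbar _ (ih _)

lemma dZbarIter_add (n : ℕ) (ks : Fin n → Fin 2) (hf : ContDiff ℝ ∞ f) (hg : ContDiff ℝ ∞ g) :
    dZbarIter n ks (fun q => f q + g q) = fun q => dZbarIter n ks f q + dZbarIter n ks g q := by
  induction n with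
  | zero => rfl
  | succ n ih =>
    funext p
    rw [dZbarIter, ih, dZbar_add _ ((contDiff_dZbarIter n _ hf).differentiable (by simp) p)
      ((contDiff_dZbarIter n _ hg).differentiable (by simp) p)]
    rfl

lemma dZbarIter_holomorphic_mul (n : ℕ) (ks : Fin n → Fin 2) (hu : Differentiable ℂ u)
    (hf : ContDiff ℝ ∞ f) :
    dZbarIter n ks (fun q => u q * f q) = fun q => u q * dZbarIter n ks f q := by
  induction n with
  | zero => rfl
  | succ n ih =>
    funext p
    rw [dZbarIter, ih, dZbar_mul _ ((hu p).restrictScalars ℝ)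
      ((contDiff_dZbarIter n _ hf).differentiable (by simp) p), dZbar_eq_zero _ (hu p), zero_mul,
      add_zero, dZbarIter]

/-- The bidifferential operator `∑ (∂_{z̄_{k₁}}⋯∂_{z̄_{kₙ}} f)(∂_{z_{k₁}}⋯∂_{z_{kₙ}} g)`, i.e. the
`n`-th coefficient of the star product without its factor `ζⁿ/n!`. -/
noncomputable def starPairing (n : ℕ) (f g : (Fin 2 → ℂ) → ℂ) (p : Fin 2 → ℂ) : ℂ :=
  ∑ ks : Fin n → Fin 2, dZbarIter n ks f p * dZIter n ks g p

lemma starTerm_eq (ζ : ℝ) (f g : (Fin 2 → ℂ) → ℂ) (n : ℕ) (p : Fin 2 → ℂ) :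
    starTerm ζ f g n p = (ζ : ℂ) ^ n / n.factorial * starPairing n f g p :=
  rfl

lemma starPairing_succ (n : ℕ) (f g : (Fin 2 → ℂ) → ℂ) (p : Fin 2 → ℂ) :
    starPairing (n + 1) f g p = ∑ k, starPairing n (dZbar k f) (dZ k g) p := by
  simp only [starPairing, dZIter_succ_last, dZbarIter_succ_last]
  rw [← (Fin.snocEquiv fun _ => Fin 2).sum_comp, Fintype.sum_prod_type]
  simp [Fin.snocEquiv]

lemma starPairing_comp_star (n : ℕ) (f g : (Fin 2 → ℂ) → ℂ) (p : Fin 2 → ℂ) :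
    starPairing n (fun q => g (star q)) (fun q => f (star q)) p = starPairing n f g (star p) := by
  simp only [starPairing, dZIter_comp_star, dZbarIter_comp_star, mul_comm]

lemma starPairing_add_left (n : ℕ) {f₁ f₂ : (Fin 2 → ℂ) → ℂ} (hf₁ : ContDiff ℝ ∞ f₁)
    (hf₂ : ContDiff ℝ ∞ f₂) (g : (Fin 2 → ℂ) → ℂ) (p : Fin 2 → ℂ) :
    starPairing n (fun q => f₁ q + f₂ q) g p = starPairing n f₁ g p + starPairing n f₂ g p := by
  simp only [starPairing, dZbarIter_add n _ hf₁ hf₂, add_mul, Finset.sum_add_distrib]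

lemma starPairing_holomorphic_mul (n : ℕ) (hu : Differentiable ℂ u) (hf : ContDiff ℝ ∞ f)
    (g : (Fin 2 → ℂ) → ℂ) (p : Fin 2 → ℂ) :
    starPairing n (fun q => u q * f q) g p = u p * starPairing n f g p := by
  simp only [starPairing, dZbarIter_holomorphic_mul n _ hu hf, mul_assoc, Finset.mul_sum]

lemma contDiff_star_apply (i : Fin 2) : ContDiff ℝ ∞ fun q : Fin 2 → ℂ => star q i :=
  (contDiff_apply ℝ ℂ i).comp (starL' ℝ : (Fin 2 → ℂ) ≃L[ℝ] (Fin 2 → ℂ)).contDiff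

lemma contDiff_comp_star (hf : ContDiff ℝ ∞ f) : ContDiff ℝ ∞ fun q => f (star q) :=
  hf.comp (starL' ℝ : (Fin 2 → ℂ) ≃L[ℝ] (Fin 2 → ℂ)).contDiff

lemma dZ_apply (i k : Fin 2) (p : Fin 2 → ℂ) : dZ k (fun q => q i) p = if i = k then 1 else 0 := by
  simp [dZ_eq_fderiv k (differentiableAt_apply i p), fderiv_apply, Pi.single_apply]

lemma dZbar_star_apply_mul (i k : Fin 2) (hf : DifferentiableAt ℝ f p) :
    dZbar k (fun q => star q i * f q) p = star p i * dZbar k f p + if i = k then f p else 0 := by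
  rw [dZbar_mul k ((contDiff_star_apply i).differentiable (by simp) p) hf,
    dZbar_comp_star k (fun q => q i), dZ_apply, ite_mul, one_mul, zero_mul]

lemma starPairing_succ_star_apply_mul (i : Fin 2) (n : ℕ) (hf : ContDiff ℝ ∞ f)
    (g : (Fin 2 → ℂ) → ℂ) (p : Fin 2 → ℂ) :
    starPairing (n + 1) (fun q => star q i * f q) g p =
      ∑ k, starPairing n (fun q => star q i * dZbar k f q) (dZ k g) p +
        starPairing n f (dZ i g) p := by
  have hterm (k : Fin 2) : starPairing n (dZbar k fun q => star q i * f q) (dZ k g) p =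
      starPairing n (fun q => star q i * dZbar k f q) (dZ k g) p +
        if i = k then starPairing n f (dZ k g) p else 0 := by
    have hleibniz : dZbar k (fun q => star q i * f q) = fun q : Fin 2 → ℂ =>
        star q i * dZbar k f q + if i = k then f q else 0 :=
      funext fun q => dZbar_star_apply_mul i k (hf.differentiable (by simp) q)
    rw [hleibniz]
    split_ifs
    · exact starPairing_add_left n ((contDiff_star_apply i).mul (contDiff_dZbar k hf)) hf _ p
    · simp only [add_zero]
  simp only [starPairing_succ, hterm, Finset.sum_add_distrib, Finset.sum_ite_eq, Finset.mem_univ,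
    if_true]

lemma starPairing_star_apply_mul (i : Fin 2) (n : ℕ) (hf : ContDiff ℝ ∞ f) (hg : ContDiff ℝ ∞ g)
    (p : Fin 2 → ℂ) :
    starPairing (n + 1) (fun q => star q i * f q) g p =
      star p i * starPairing (n + 1) f g p + (n + 1) * starPairing n f (dZ i g) p := by
  induction n generalizing f g with
  | zero =>
    rw [starPairing_succ_star_apply_mul i 0 hf, starPairing_succ]
    simp [starPairing, dZbarIter, dZIter, mul_add, mul_assoc]
  | succ n ih =>
    have hcomm : ∑ k, starPairing n (dZbar k f) (dZ i (dZ k g)) p =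
        starPairing (n + 1) f (dZ i g) p := by
      simp only [starPairing_succ, dZ_comm i _ hg]
    rw [starPairing_succ_star_apply_mul i _ hf, starPairing_succ (n + 1) f g]
    simp only [fun k => ih (contDiff_dZbar k hf) (contDiff_dZ k hg), Finset.sum_add_distrib,
      ← Finset.mul_sum, hcomm]
    push_cast
    ring

/-- `f * g = h`, including the convergence of the star-product series at every point. The
convergence is unconditional, as in `HasSum`. -/
def HasStarProd (ζ : ℝ) (f g h : (Fin 2 → ℂ) → ℂ) : Prop :=
  ∀ p, HasSum (fun n => starTerm ζ f g n p) (h p)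

namespace HasStarProd

variable {ζ : ℝ} {h : (Fin 2 → ℂ) → ℂ}

lemma comp_star (H : HasStarProd ζ f g h) :
    HasStarProd ζ (fun q => g (star q)) (fun q => f (star q)) (fun q => h (star q)) := fun p => by
  simpa only [starTerm_eq, starPairing_comp_star] using H (star p)

lemma holomorphic_mul (hu : Differentiable ℂ u) (hf : ContDiff ℝ ∞ f) (H : HasStarProd ζ f g h) :
    HasStarProd ζ (fun q => u q * f q) g (fun q => u q * h q) := fun p => by
  simpa only [starTerm_eq, starPairing_holomorphic_mul _ hu hf, mul_left_comm] using
    (H p).mul_left (u p)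

lemma add_left {f₁ f₂ h₁ h₂ : (Fin 2 → ℂ) → ℂ} (hf₁ : ContDiff ℝ ∞ f₁) (hf₂ : ContDiff ℝ ∞ f₂)
    (H₁ : HasStarProd ζ f₁ g h₁) (H₂ : HasStarProd ζ f₂ g h₂) :
    HasStarProd ζ (fun q => f₁ q + f₂ q) g (fun q => h₁ q + h₂ q) := fun p => by
  simpa only [starTerm_eq, starPairing_add_left _ hf₁ hf₂, mul_add] using (H₁ p).add (H₂ p)

lemma antiholomorphic_mul (hu : Differentiable ℂ u) (hg : ContDiff ℝ ∞ g)
    (H : HasStarProd ζ f g h) :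
    HasStarProd ζ f (fun q => u (star q) * g q) (fun q => u (star q) * h q) := by
  simpa using (H.comp_star.holomorphic_mul hu (contDiff_comp_star hg)).comp_star

lemma add_right {g₁ g₂ h₁ h₂ : (Fin 2 → ℂ) → ℂ} (hg₁ : ContDiff ℝ ∞ g₁) (hg₂ : ContDiff ℝ ∞ g₂)
    (H₁ : HasStarProd ζ f g₁ h₁) (H₂ : HasStarProd ζ f g₂ h₂) :
    HasStarProd ζ f (fun q => g₁ q + g₂ q) (fun q => h₁ q + h₂ q) := by
  simpa using (H₁.comp_star.add_left (contDiff_comp_star hg₁) (contDiff_comp_star hg₂)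
    H₂.comp_star).comp_star

lemma star_apply_mul {h' : (Fin 2 → ℂ) → ℂ} (i : Fin 2) (hf : ContDiff ℝ ∞ f)
    (hg : ContDiff ℝ ∞ g) (H : HasStarProd ζ f g h) (H' : HasStarProd ζ f (dZ i g) h') :
    HasStarProd ζ (fun q => star q i * f q) g (fun q => star q i * h q + ζ * h' q) := fun p => by
  have hzero : starTerm ζ (fun q => star q i * f q) g 0 p = star p i * starTerm ζ f g 0 p := by
    simp [starTerm_eq, starPairing, dZIter, dZbarIter, mul_assoc]
  have hsucc (n : ℕ) : starTerm ζ (fun q => star q i * f q) g (n + 1) p -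
      star p i * starTerm ζ f g (n + 1) p = ζ * starTerm ζ f (dZ i g) n p := by
    simp only [starTerm_eq, starPairing_star_apply_mul i n hf hg, Nat.factorial_succ]
    push_cast
    field_simp
    ring
  have hdiff : HasSum (fun n => starTerm ζ (fun q => star q i * f q) g n p -
      star p i * starTerm ζ f g n p) (ζ * h' p) := by
    rw [← hasSum_nat_add_iff' 1]
    simpa only [hsucc, Finset.sum_range_one, hzero, sub_self, sub_zero] using
      (H' p).mul_left (ζ : ℂ)
  simpa using ((H p).mul_left (star p i)).add hdiff

end HasStarProd

/-- The Gaussian `e^{-(z₁z̄₁ + z₂z̄₂)/ζ}`, which plays the role of the vacuum projection: it is a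
`*`-idempotent annihilated by `z̄_i + ζ∂_{z_i}`. -/
noncomputable def vacuum (ζ : ℝ) (p : Fin 2 → ℂ) : ℂ :=
  Complex.exp (-(ζ : ℂ)⁻¹ * ∑ i, p i * star p i)

section Vacuum

variable (ζ : ℝ)

lemma contDiff_sum_mul_star : ContDiff ℝ ∞ fun q : Fin 2 → ℂ => ∑ i, q i * star q i :=
  ContDiff.sum fun i _ => (contDiff_apply ℝ ℂ i).mul (contDiff_star_apply i)

lemma contDiff_vacuum : ContDiff ℝ ∞ (vacuum ζ) :=
  (contDiff_const.mul contDiff_sum_mul_star).cexp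

lemma vacuum_star (p : Fin 2 → ℂ) : vacuum ζ (star p) = vacuum ζ p := by
  simp [vacuum, mul_comm]

lemma dZ_sum_mul_star (k : Fin 2) (p : Fin 2 → ℂ) :
    dZ k (fun q => ∑ i, q i * star q i) p = star p k := by
  have hd (i : Fin 2) : DifferentiableAt ℝ (fun q : Fin 2 → ℂ => star q i) p :=
    (contDiff_star_apply i).differentiable (by simp) p
  have hterm (i : Fin 2) : dZ k (fun q => q i * star q i) p = if i = k then star p i else 0 := by
    rw [dZ_mul k (differentiableAt_apply i p) (hd i), dZ_apply,
      dZ_comp_star k (fun q => q i), dZbar_eq_zero k (differentiableAt_apply i (star p))]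
    simp
  rw [dZ_sum k fun i => (differentiableAt_apply i p).fun_mul (hd i)]
  simp only [hterm, Finset.sum_ite_eq', Finset.mem_univ, if_true]

lemma dZ_vacuum (k : Fin 2) (p : Fin 2 → ℂ) :
    dZ k (vacuum ζ) p = -(ζ : ℂ)⁻¹ * star p k * vacuum ζ p := by
  have hd := contDiff_sum_mul_star.differentiable (by simp) p
  unfold vacuum
  rw [dZ_cexp k (hd.const_mul _), dZ_mul k (differentiableAt_const _) hd, dZ_sum_mul_star,
    dZ_eq_fderiv k (differentiableAt_const _)]
  simp [mul_comm]

lemma dZbar_vacuum (k : Fin 2) (p : Fin 2 → ℂ) :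
    dZbar k (vacuum ζ) p = -(ζ : ℂ)⁻¹ * p k * vacuum ζ p := by
  have h := dZ_vacuum ζ k (star p)
  rw [← dZbar_comp_star, funext (vacuum_star ζ), vacuum_star, star_star] at h
  exact h

lemma dZbarIter_vacuum (n : ℕ) (ks : Fin n → Fin 2) (p : Fin 2 → ℂ) :
    dZbarIter n ks (vacuum ζ) p = (∏ j, -(ζ : ℂ)⁻¹ * p (ks j)) * vacuum ζ p := by
  induction n with
  | zero => simp [dZbarIter]
  | succ n ih =>
    have hu : Differentiable ℂ fun q : Fin 2 → ℂ => -(ζ : ℂ)⁻¹ * q (ks (Fin.last n)) := by fun_prop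
    rw [dZbarIter_succ_last, funext (dZbar_vacuum ζ _),
      dZbarIter_holomorphic_mul n _ hu (contDiff_vacuum ζ)]
    simp only [ih, Fin.prod_univ_castSucc, Fin.init]
    ring

lemma dZIter_vacuum (n : ℕ) (ks : Fin n → Fin 2) (p : Fin 2 → ℂ) :
    dZIter n ks (vacuum ζ) p = (∏ j, -(ζ : ℂ)⁻¹ * star p (ks j)) * vacuum ζ p := by
  have h := dZbarIter_vacuum ζ n ks (star p)
  rwa [← funext_iff.1 (dZIter_comp_star n ks _) p, funext (vacuum_star ζ), vacuum_star] at h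

variable {ζ}

lemma starTerm_vacuum (hζ : ζ ≠ 0) (n : ℕ) (p : Fin 2 → ℂ) :
    starTerm ζ (vacuum ζ) (vacuum ζ) n p =
      vacuum ζ p ^ 2 * (((ζ : ℂ)⁻¹ * ∑ i, p i * star p i) ^ n / n.factorial) := by
  have hζ' : (ζ : ℂ) ≠ 0 := by exact_mod_cast hζ
  have hpair : starPairing n (vacuum ζ) (vacuum ζ) p =
      (∑ i, (ζ : ℂ)⁻¹ ^ 2 * (p i * star p i)) ^ n * vacuum ζ p ^ 2 := by
    rw [Fintype.sum_pow, Finset.sum_mul]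
    refine Finset.sum_congr rfl fun ks _ => ?_
    rw [dZbarIter_vacuum, dZIter_vacuum, mul_mul_mul_comm, ← Finset.prod_mul_distrib, ← sq]
    congr 1
    exact Finset.prod_congr rfl fun j _ => by ring
  have hscalar : (ζ : ℂ) ^ n * ((ζ : ℂ)⁻¹ ^ 2) ^ n = (ζ : ℂ)⁻¹ ^ n := by
    rw [← mul_pow]
    congr 1
    field_simp
  rw [starTerm_eq, hpair, ← Finset.mul_sum, mul_pow, mul_pow (ζ : ℂ)⁻¹, ← hscalar]
  ring

lemma hasStarProd_vacuum (hζ : ζ ≠ 0) :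
    HasStarProd ζ (vacuum ζ) (vacuum ζ) (vacuum ζ) := fun p => by
  have hexp := NormedSpace.expSeries_div_hasSum_exp ((ζ : ℂ)⁻¹ * ∑ i, p i * star p i)
  rw [← Complex.exp_eq_exp_ℂ] at hexp
  have hval : vacuum ζ p ^ 2 * Complex.exp ((ζ : ℂ)⁻¹ * ∑ i, p i * star p i) = vacuum ζ p := by
    rw [vacuum, ← Complex.exp_nat_mul, ← Complex.exp_add]
    congr 1
    push_cast
    ring
  rw [← hval]
  simpa only [starTerm_vacuum hζ] using hexp.mul_left (vacuum ζ p ^ 2)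

lemma HasStarProd.star_apply_mul_vacuum {h h' : (Fin 2 → ℂ) → ℂ} (hζ : ζ ≠ 0) (i : Fin 2)
    (hf : ContDiff ℝ ∞ f) (hu : ContDiff ℝ ∞ u) (H : HasStarProd ζ f (fun q => u q * vacuum ζ q) h)
    (H' : HasStarProd ζ f (fun q => dZ i u q * vacuum ζ q) h') :
    HasStarProd ζ (fun q => star q i * f q) (fun q => u q * vacuum ζ q) (fun q => ζ * h' q) := by
  have hζ' : (ζ : ℂ) ≠ 0 := by exact_mod_cast hζ
  have hg : ContDiff ℝ ∞ fun q => u q * vacuum ζ q := hu.mul (contDiff_vacuum ζ)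
  have hdZ : dZ i (fun q => u q * vacuum ζ q) = fun q : Fin 2 → ℂ =>
      -(ζ : ℂ)⁻¹ * star q i * (u q * vacuum ζ q) + dZ i u q * vacuum ζ q := by
    funext q
    rw [dZ_mul i (hu.differentiable (by simp) q)
      ((contDiff_vacuum ζ).differentiable (by simp) q), dZ_vacuum]
    ring
  have hv : Differentiable ℂ fun q : Fin 2 → ℂ => -(ζ : ℂ)⁻¹ * q i := by fun_prop
  have Hanti := H.antiholomorphic_mul hv hg
  have Hd : HasStarProd ζ f (dZ i fun q => u q * vacuum ζ q) fun q =>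
      -(ζ : ℂ)⁻¹ * star q i * h q + h' q := by
    rw [hdZ]
    exact Hanti.add_right ((contDiff_const.mul (contDiff_star_apply i)).mul hg)
      ((contDiff_dZ i hu).mul (contDiff_vacuum ζ)) H'
  convert H.star_apply_mul i hf hg Hd using 2 with q
  field_simp
  ring

end Vacuum

section Fock

/-- The holomorphic monomial `z₁^{m₁} z₂^{m₂}`; its value at `star p` is the antiholomorphic one. -/
def monomial (m : Fin 2 → ℕ) (p : Fin 2 → ℂ) : ℂ :=
  ∏ i, p i ^ m i

lemma contDiff_monomial (m : Fin 2 → ℕ) : ContDiff ℂ ∞ (monomial m) :=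
  contDiff_prod fun i _ => (contDiff_apply ℂ ℂ i).pow (m i)

lemma monomial_zero : monomial 0 = fun _ => 1 := by
  funext p
  simp [monomial]

lemma monomial_add_single (m : Fin 2 → ℕ) (i : Fin 2) :
    monomial (m + Pi.single i 1) = fun p => p i * monomial m p := by
  funext p
  simp only [monomial, Pi.add_apply, pow_add, Finset.prod_mul_distrib, mul_comm (p i)]
  simp [Pi.single_apply]

lemma dZ_monomial (m : Fin 2 → ℕ) (k : Fin 2) (p : Fin 2 → ℂ) :
    dZ k (monomial m) p = m k * monomial (m - Pi.single k 1) p := by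
  have hpow (i : Fin 2) : HasFDerivAt (fun q : Fin 2 → ℂ => q i ^ m i) _ p :=
    (hasFDerivAt_apply (𝕜 := ℂ) i p).pow (m i)
  have hprod : HasFDerivAt (monomial m) _ p :=
    ((hpow 0).mul (hpow 1)).congr_of_eventuallyEq (.of_forall fun q => Fin.prod_univ_two _)
  rw [dZ_eq_fderiv k hprod.differentiableAt, hprod.fderiv]
  fin_cases k <;> simp [monomial] <;> ring

lemma single_one_le {ι : Type*} [DecidableEq ι] {l : ι → ℕ} {i : ι} (hi : l i ≠ 0) :
    Pi.single i 1 ≤ l := by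
  intro j
  obtain rfl | hj := eq_or_ne j i
  · simpa [Nat.one_le_iff_ne_zero] using hi
  · simp [hj]

lemma multiIndex_induction {ι : Type*} [Finite ι] [DecidableEq ι] {P : (ι → ℕ) → Prop}
    (zero : P 0) (add_single : ∀ l i, P l → P (l + Pi.single i 1)) (l : ι → ℕ) : P l := by
  cases nonempty_fintype ι
  induction hN : ∑ i, l i generalizing l with
  | zero =>
    obtain rfl : l = 0 := by simpa [funext_iff] using hN
    exact zero
  | succ N ih =>
    obtain ⟨i, hi⟩ : ∃ i, l i ≠ 0 := by
      by_contra! hl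
      simp [hl] at hN
    rw [← tsub_add_cancel_of_le (single_one_le hi)] at hN ⊢
    refine add_single _ i (ih _ ?_)
    simpa [Finset.sum_add_distrib] using hN

/-- The squared norm `m₁! m₂! ζ^{m₁+m₂}` of the monomial `z₁^{m₁} z₂^{m₂}` in Fock space. -/
noncomputable def normSq (ζ : ℝ) (m : Fin 2 → ℕ) : ℝ :=
  ∏ i, (m i).factorial * ζ ^ m i

lemma normSq_zero (ζ : ℝ) : normSq ζ 0 = 1 := by simp [normSq]

lemma normSq_pos {ζ : ℝ} (hζ : 0 < ζ) (m : Fin 2 → ℕ) : 0 < normSq ζ m :=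
  Finset.prod_pos fun i _ => by positivity

lemma normSq_add_single (ζ : ℝ) (m : Fin 2 → ℕ) (i : Fin 2) :
    normSq ζ (m + Pi.single i 1) = ζ * (m i + 1) * normSq ζ m := by
  fin_cases i <;> simp [normSq, Nat.factorial_succ] <;> ring

variable {ζ : ℝ}

lemma contDiff_monomial_mul_vacuum (m : Fin 2 → ℕ) :
    ContDiff ℝ ∞ fun q => monomial m q * vacuum ζ q :=
  ((contDiff_monomial m).restrict_scalars ℝ).mul (contDiff_vacuum ζ)

lemma HasStarProd.star_apply_mul_monomial {h h' : (Fin 2 → ℂ) → ℂ} (hζ : ζ ≠ 0) (i : Fin 2)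
    (m : Fin 2 → ℕ) (hf : ContDiff ℝ ∞ f)
    (H : HasStarProd ζ f (fun q => monomial m q * vacuum ζ q) h)
    (H' : HasStarProd ζ f (fun q => monomial (m - Pi.single i 1) q * vacuum ζ q) h') :
    HasStarProd ζ (fun q => star q i * f q) (fun q => monomial m q * vacuum ζ q)
      (fun q => ζ * (m i * h' q)) := by
  refine H.star_apply_mul_vacuum hζ i hf ((contDiff_monomial m).restrict_scalars ℝ) ?_
  simpa only [dZ_monomial, mul_assoc] using
    H'.antiholomorphic_mul (differentiable_const (m i : ℂ)) (contDiff_monomial_mul_vacuum _)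

lemma contDiff_star_monomial_mul_vacuum (l : Fin 2 → ℕ) :
    ContDiff ℝ ∞ fun q => monomial l (star q) * vacuum ζ q :=
  (contDiff_comp_star ((contDiff_monomial l).restrict_scalars ℝ)).mul (contDiff_vacuum ζ)

lemma hasStarProd_star_monomial_vacuum (hζ : ζ ≠ 0) (l : Fin 2 → ℕ) :
    HasStarProd ζ (fun q => monomial l (star q) * vacuum ζ q) (fun q => monomial 0 q * vacuum ζ q)
      (fun q => (if l = 0 then 1 else 0) * vacuum ζ q) := by
  induction l using multiIndex_induction with
  | zero => simpa [monomial_zero] using hasStarProd_vacuum hζ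
  | add_single l i ih =>
    have H := ih.star_apply_mul_monomial hζ i 0 (contDiff_star_monomial_mul_vacuum l)
      (by simpa using ih)
    simpa [monomial_add_single, mul_assoc] using H

lemma ite_normSq_add_single (ζ : ℝ) (l m : Fin 2 → ℕ) (i : Fin 2) :
    (if l + Pi.single i 1 = m then normSq ζ (l + Pi.single i 1) else 0) =
      ζ * (m i * if l = m - Pi.single i 1 then normSq ζ l else 0) := by
  by_cases hmi : m i = 0
  · have hne : l + Pi.single i 1 ≠ m := by
      rintro rfl
      simp at hmi
    simp [hne, hmi]
  · simp only [eq_tsub_iff_add_eq_of_le (single_one_le hmi)]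
    split_ifs with hlm
    · subst hlm
      simp [normSq_add_single, mul_assoc]
    · simp

lemma hasStarProd_star_monomial_monomial (hζ : ζ ≠ 0) (l m : Fin 2 → ℕ) :
    HasStarProd ζ (fun q => monomial l (star q) * vacuum ζ q) (fun q => monomial m q * vacuum ζ q)
      (fun q => (if l = m then normSq ζ l else 0 : ℝ) * vacuum ζ q) := by
  induction l using multiIndex_induction generalizing m with
  | zero =>
    have H := (hasStarProd_star_monomial_vacuum hζ m).comp_star
    simpa [vacuum_star, monomial_zero, normSq_zero, eq_comm, apply_ite] using H
  | add_single l i ih =>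
    have H := (ih m).star_apply_mul_monomial hζ i m (contDiff_star_monomial_mul_vacuum l) (ih _)
    simpa only [ite_normSq_add_single, monomial_add_single, mul_assoc, Pi.star_apply,
      Complex.ofReal_mul, Complex.ofReal_natCast] using H

/-- The unnormalised twisted Fock basis function `z^m e^{-(z₁z̄₁ + z₂z̄₂)/ζ} z̄^n`. -/
noncomputable def fock (ζ : ℝ) (m n : Fin 2 → ℕ) (p : Fin 2 → ℂ) : ℂ :=
  monomial m p * (monomial n (star p) * vacuum ζ p)

lemma contDiff_fock (m n : Fin 2 → ℕ) : ContDiff ℝ ∞ (fock ζ m n) :=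
  ((contDiff_monomial m).restrict_scalars ℝ).mul (contDiff_star_monomial_mul_vacuum n)

lemma hasStarProd_fock (hζ : ζ ≠ 0) (k l m n : Fin 2 → ℕ) :
    HasStarProd ζ (fock ζ k l) (fock ζ m n)
      (fun q => (if l = m then normSq ζ l else 0 : ℝ) * fock ζ k n q) := by
  have hmonomial (m : Fin 2 → ℕ) : Differentiable ℂ (monomial m) :=
    (contDiff_monomial m).differentiable (by simp)
  have H := ((hasStarProd_star_monomial_monomial hζ l m).holomorphic_mul (hmonomial k)
    (contDiff_star_monomial_mul_vacuum l)).antiholomorphic_mul (hmonomial n)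
    (contDiff_monomial_mul_vacuum m)
  convert H using 2 with q q q <;> simp only [fock] <;> ring

lemma sqrt_normSq (hζ : 0 ≤ ζ) (m₁ m₂ : ℕ) :
    √(normSq ζ ![m₁, m₂]) = √(m₁.factorial * m₂.factorial) * √ζ ^ (m₁ + m₂) := by
  have hpow : normSq ζ ![m₁, m₂] = m₁.factorial * m₂.factorial * (√ζ ^ (m₁ + m₂)) ^ 2 := by
    rw [← pow_mul, mul_comm _ 2, pow_mul, Real.sq_sqrt hζ, pow_add]
    simp only [normSq, Fin.prod_univ_two, Matrix.cons_val_zero, Matrix.cons_val_one]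
    ring
  rw [hpow, Real.sqrt_mul (by positivity), Real.sqrt_sq (by positivity)]

lemma eFun_eq_fock (hζ : 0 ≤ ζ) (m₁ m₂ n₁ n₂ : ℕ) :
    eFun ζ m₁ m₂ n₁ n₂ = fun p =>
      (√(normSq ζ ![m₁, m₂]) * √(normSq ζ ![n₁, n₂]) : ℂ)⁻¹ * fock ζ ![m₁, m₂] ![n₁, n₂] p := by
  have hfactorial : √(m₁.factorial * m₂.factorial * n₁.factorial * n₂.factorial) =
      √(m₁.factorial * m₂.factorial) * √(n₁.factorial * n₂.factorial) := by
    rw [mul_assoc, Real.sqrt_mul (by positivity)]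
  funext p
  have hvacuum : Complex.exp (-(p 0 * starRingEnd ℂ (p 0) + p 1 * starRingEnd ℂ (p 1)) / (ζ : ℂ)) =
      vacuum ζ p := by
    rw [vacuum, Fin.sum_univ_two, neg_div, div_eq_inv_mul, ← neg_mul]
    rfl
  rw [eFun, hfactorial, hvacuum, sqrt_normSq hζ, sqrt_normSq hζ, fock]
  simp only [monomial, Fin.prod_univ_two, Matrix.cons_val_zero, Matrix.cons_val_one, Pi.star_apply,
    Complex.star_def, Complex.ofReal_mul, Complex.ofReal_pow]
  ring

lemma hasStarProd_eFun (hζ : 0 < ζ) (k₁ k₂ l₁ l₂ m₁ m₂ n₁ n₂ : ℕ) :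
    HasStarProd ζ (eFun ζ k₁ k₂ l₁ l₂) (eFun ζ m₁ m₂ n₁ n₂) (fun p =>
      (if l₁ = m₁ then 1 else 0) * (if l₂ = m₂ then 1 else 0) * eFun ζ k₁ k₂ n₁ n₂ p) := by
  have hsq (m : Fin 2 → ℕ) : (√(normSq ζ m) * √(normSq ζ m) : ℂ) = normSq ζ m := by
    exact_mod_cast Real.mul_self_sqrt (normSq_pos hζ m).le
  have hne (m : Fin 2 → ℕ) : (√(normSq ζ m) : ℂ) ≠ 0 := by
    exact_mod_cast (Real.sqrt_pos.2 (normSq_pos hζ m)).ne'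
  simp only [eFun_eq_fock hζ.le]
  have H := ((hasStarProd_fock hζ.ne' ![k₁, k₂] ![l₁, l₂] ![m₁, m₂] ![n₁, n₂]).holomorphic_mul
    (differentiable_const (√(normSq ζ ![k₁, k₂]) * √(normSq ζ ![l₁, l₂]) : ℂ)⁻¹)
    (contDiff_fock _ _)).antiholomorphic_mul
    (differentiable_const (√(normSq ζ ![m₁, m₂]) * √(normSq ζ ![n₁, n₂]) : ℂ)⁻¹)
    (contDiff_fock _ _)
  convert H using 2 with p
  have hδ : ((if l₁ = m₁ then 1 else 0) * (if l₂ = m₂ then 1 else 0) : ℂ) =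
      if ![l₁, l₂] = ![m₁, m₂] then 1 else 0 := by
    simp [← ite_and, and_comm]
  rw [hδ]
  split_ifs with hlm
  · rw [← hlm, ← hsq]
    field_simp [hne]
  · simp

end Fock

end StarProduct

/-- For `ζ > 0`, the Karabegov star-product series for
`e_{(k₁,k₂,l₁,l₂)} * e_{(m₁,m₂,n₁,n₂)}` converges at every point of `ℂ²` and
`e_{(k₁,k₂,l₁,l₂)} * e_{(m₁,m₂,n₁,n₂)} = δ_{l₁m₁} δ_{l₂m₂} e_{(k₁,k₂,n₁,n₂)}`. -/
theorem eFun_starProd (ζ : ℝ) (hζ : 0 < ζ) (k₁ k₂ l₁ l₂ m₁ m₂ n₁ n₂ : ℕ) :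
    (∀ p : Fin 2 → ℂ,
      Summable (fun n : ℕ => starTerm ζ (eFun ζ k₁ k₂ l₁ l₂) (eFun ζ m₁ m₂ n₁ n₂) n p)) ∧
    (∀ p : Fin 2 → ℂ,
      starProd ζ (eFun ζ k₁ k₂ l₁ l₂) (eFun ζ m₁ m₂ n₁ n₂) p =
        (if l₁ = m₁ then 1 else 0) * (if l₂ = m₂ then 1 else 0) * eFun ζ k₁ k₂ n₁ n₂ p) := by
  have H := hasStarProd_eFun hζ k₁ k₂ l₁ l₂ m₁ m₂ n₁ n₂
  exact ⟨fun p => (H p).summable, fun p => (H p).tsum_eq⟩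

end Paper
end
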